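/- arXiv:1805.06007 — 3 statements merged into one kernel-verified Lean document; each statement's English description precedes it below -/
import Mathlib

section
/- Let Ω = 𝕋² × (−h, 0) with 𝕋² = ℝ²/ℤ² and h > 0. There exists a constant C > 0 such that for all smooth functions v : Ω̄ → ℝ² (periodic in the horizontal variables), φ : Ω̄ → ℝ, and ψ : Ω̄ → ℝ, one has │∫_Ω ( ∫_{−h}^{z} ∇₂·v(x, y, ζ) dζ ) φ(x,y,z) ψ(x,y,z) dx dy dz│ ≤ C ‖∇v‖_{L²(Ω)}^{1/2} (‖∇v‖_{L²(Ω)} + ‖∇∇v‖_{L²(Ω)})^{1/2} ‖φ‖_{L²(Ω)}^{1/2} (‖φ‖_{L²(Ω)} + ‖∇φ‖_{L²(Ω)})^{1/2} ‖ψ‖_{L²(Ω)}. -/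
open MeasureTheory

/-- The measure on the fundamental domain `(0,1)² × (-h,0)` of the slab
`Ω = 𝕋² × (-h, 0)`. -/
noncomputable def slabMeasure (h : ℝ) : Measure (ℝ × ℝ × ℝ) :=
  volume.restrict (Set.Ioo (0 : ℝ) 1 ×ˢ Set.Ioo (0 : ℝ) 1 ×ˢ Set.Ioo (-h) 0)

/-- A function on `ℝ³` represents a function on `Ω = 𝕋² × (-h,0)` if it is
`1`-periodic in both horizontal variables. -/
def HorizontallyPeriodic {α : Type*} (f : ℝ × ℝ × ℝ → α) : Prop :=
  (∀ x y z : ℝ, f (x + 1, y, z) = f (x, y, z)) ∧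
    ∀ x y z : ℝ, f (x, y + 1, z) = f (x, y, z)

/-- The horizontal divergence `∇₂·v = ∂ₓv₁ + ∂ᵧv₂` of a horizontal vector field. -/
noncomputable def divH (v : ℝ × ℝ × ℝ → ℝ × ℝ) (p : ℝ × ℝ × ℝ) : ℝ :=
  fderiv ℝ (fun q => (v q).1) p (1, 0, 0) + fderiv ℝ (fun q => (v q).2) p (0, 1, 0)

open Set
open scoped ENNReal

/-!
A one-dimensional Sobolev embedding bounds `|f|²` pointwise on a unit segment by the integral of
`|f|² + 2|f||∇f|` along it. Applied to `∇v` in the direction `y`, after Cauchy-Schwarz in `z`, it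
bounds the square of the vertical integral of `∇₂·v` by a function of `x` alone; applied to `φ` in
the direction `x`, it bounds `φ²` by a function of `(y, z)` alone. The integral over `Ω` of the
product of these two bounds therefore factorizes, and Cauchy-Schwarz against `ψ` concludes.
-/

section CauchySchwarz

variable {α : Type*} [MeasurableSpace α] {μ : Measure α}

theorem sq_eLpNorm_two {E : Type*} [NormedAddCommGroup E] (f : α → E) :
    eLpNorm f 2 μ ^ 2 = ∫⁻ x, ‖f x‖ₑ ^ 2 ∂μ := by
  simpa using eLpNorm_nnreal_pow_eq_lintegral (μ := μ) (f := f) (p := 2) two_ne_zero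

theorem sq_lintegral_mul_le {f g : α → ℝ≥0∞} (hf : AEMeasurable f μ) (hg : AEMeasurable g μ) :
    (∫⁻ x, f x * g x ∂μ) ^ 2 ≤ (∫⁻ x, f x ^ 2 ∂μ) * ∫⁻ x, g x ^ 2 ∂μ := by
  calc (∫⁻ x, f x * g x ∂μ) ^ 2
      ≤ ((∫⁻ x, f x ^ (2 : ℝ) ∂μ) ^ (1 / 2 : ℝ) * (∫⁻ x, g x ^ (2 : ℝ) ∂μ) ^ (1 / 2 : ℝ)) ^ 2 := by
        gcongr
        exact ENNReal.lintegral_mul_le_Lp_mul_Lq μ Real.HolderConjugate.two_two hf hg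
    _ = (∫⁻ x, f x ^ 2 ∂μ) * ∫⁻ x, g x ^ 2 ∂μ := by
        simp [mul_pow, ← ENNReal.rpow_mul_natCast]

theorem sq_lintegral_mul_mul_le_of_sq_le_lintegral {β : Type*} [MeasurableSpace β]
    {ν : Measure β} [SFinite μ] [SFinite ν] {a b c F G : α × β → ℝ≥0∞}
    (hF : Measurable F) (hG : Measurable G)
    (hc : AEMeasurable c (μ.prod ν))
    (ha : ∀ᵐ p ∂μ.prod ν, a p ^ 2 ≤ ∫⁻ y, F (p.1, y) ∂ν)
    (hb : ∀ᵐ p ∂μ.prod ν, b p ^ 2 ≤ ∫⁻ x, G (x, p.2) ∂μ) :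
    (∫⁻ p, a p * b p * c p ∂μ.prod ν) ^ 2 ≤
      (∫⁻ p, F p ∂μ.prod ν) * (∫⁻ p, G p ∂μ.prod ν) * ∫⁻ p, c p ^ 2 ∂μ.prod ν := by
  set S : α → ℝ≥0∞ := fun x => ∫⁻ y, F (x, y) ∂ν
  set T : β → ℝ≥0∞ := fun y => ∫⁻ x, G (x, y) ∂μ
  have hS : Measurable S := hF.lintegral_prod_right'
  have hT : Measurable T := hG.lintegral_prod_left'
  set w : α × β → ℝ≥0∞ := fun p => (S p.1 * T p.2) ^ (1 / 2 : ℝ)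
  have hw : Measurable w := ((hS.comp measurable_fst).mul (hT.comp measurable_snd)).pow_const _
  have hw_sq (p : α × β) : w p ^ 2 = S p.1 * T p.2 := by simp [w, ← ENNReal.rpow_mul_natCast]
  have mul_le_w : ∀ᵐ p ∂μ.prod ν, a p * b p ≤ w p := by
    filter_upwards [ha, hb] with p hap hbp
    rw [← ENNReal.pow_le_pow_left_iff two_ne_zero, mul_pow, hw_sq]
    exact mul_le_mul' hap hbp
  calc (∫⁻ p, a p * b p * c p ∂μ.prod ν) ^ 2
      ≤ (∫⁻ p, w p * c p ∂μ.prod ν) ^ 2 := by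
        gcongr 1
        exact lintegral_mono_ae (mul_le_w.mono fun p hp => mul_le_mul_left hp _)
    _ ≤ (∫⁻ p, w p ^ 2 ∂μ.prod ν) * ∫⁻ p, c p ^ 2 ∂μ.prod ν :=
        sq_lintegral_mul_le hw.aemeasurable hc
    _ = (∫⁻ p, F p ∂μ.prod ν) * (∫⁻ p, G p ∂μ.prod ν) * ∫⁻ p, c p ^ 2 ∂μ.prod ν := by
        simp_rw [hw_sq]
        rw [lintegral_prod_mul hS.aemeasurable hT.aemeasurable, lintegral_prod F hF.aemeasurable,
          lintegral_prod_symm G hG.aemeasurable]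

end CauchySchwarz

section Interval

variable {E : Type*} [NormedAddCommGroup E] [NormedSpace ℝ E] {f : ℝ → E} {a b s : ℝ}

theorem sq_enorm_intervalIntegral_le (hf : AEStronglyMeasurable f (volume.restrict (Ioc a b)))
    (hs : s ∈ Icc a b) :
    ‖∫ t in a..s, f t‖ₑ ^ 2 ≤ ENNReal.ofReal (b - a) * ∫⁻ t in Ioc a b, ‖f t‖ₑ ^ 2 := by
  calc ‖∫ t in a..s, f t‖ₑ ^ 2 ≤ (∫⁻ t in Ioc a b, 1 * ‖f t‖ₑ) ^ 2 := by
        rw [intervalIntegral.integral_of_le hs.1]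
        simp_rw [one_mul]
        gcongr
        exact (enorm_integral_le_lintegral_enorm _).trans
          (lintegral_mono_set (Ioc_subset_Ioc_right hs.2))
    _ ≤ (∫⁻ _ in Ioc a b, 1 ^ 2) * ∫⁻ t in Ioc a b, ‖f t‖ₑ ^ 2 :=
        sq_lintegral_mul_le aemeasurable_const hf.enorm
    _ = ENNReal.ofReal (b - a) * ∫⁻ t in Ioc a b, ‖f t‖ₑ ^ 2 := by simp

theorem enorm_le_laverage_add_lintegral_deriv (hab : a < b) (hf : ContDiffOn ℝ 1 f (Icc a b))
    (hs : s ∈ Icc a b) :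
    ‖f s‖ₑ ≤ (⨍⁻ t in Icc a b, ‖f t‖ₑ ∂volume) + ∫⁻ t in Icc a b, ‖deriv f t‖ₑ := by
  have increment_le {t u : ℝ} (hat : a ≤ t) (htu : t ≤ u) (hub : u ≤ b) :
      ‖f u - f t‖ₑ ≤ ∫⁻ r in Icc a b, ‖deriv f r‖ₑ :=
    (enorm_sub_le_lintegral_deriv_of_contDiffOn_Icc (hf.mono (Icc_subset_Icc hat hub)) htu).trans
      (lintegral_mono_set (Icc_subset_Icc hat hub))
  have le_add : ∀ t ∈ Icc a b, ‖f s‖ₑ ≤ ‖f t‖ₑ + ∫⁻ r in Icc a b, ‖deriv f r‖ₑ := by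
    intro t ht
    calc ‖f s‖ₑ = ‖f t + (f s - f t)‖ₑ := by rw [add_sub_cancel]
      _ ≤ ‖f t‖ₑ + ‖f s - f t‖ₑ := enorm_add_le _ _
      _ ≤ ‖f t‖ₑ + ∫⁻ r in Icc a b, ‖deriv f r‖ₑ := by
        gcongr
        rcases le_total t s with hts | hst
        · exact increment_le ht.1 hts hs.2
        · rw [← neg_sub, enorm_neg]
          exact increment_le hs.1 hst ht.2
  have : NeZero (volume.restrict (Icc a b)) := ⟨by simpa [Measure.restrict_eq_zero] using hab⟩
  calc ‖f s‖ₑ = ⨍⁻ _ in Icc a b, ‖f s‖ₑ ∂volume := (laverage_const _ _).symm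
    _ ≤ ⨍⁻ t in Icc a b, (‖f t‖ₑ + ∫⁻ r in Icc a b, ‖deriv f r‖ₑ) ∂volume :=
        laverage_mono_ae ((ae_restrict_mem measurableSet_Icc).mono le_add)
    _ = (⨍⁻ t in Icc a b, ‖f t‖ₑ ∂volume) + ∫⁻ t in Icc a b, ‖deriv f t‖ₑ := by
        rw [laverage, lintegral_add_right _ measurable_const, ← laverage, ← laverage,
          laverage_const]

/- As `‖f‖²` need not be differentiable, the previous bound is applied to the square of a linear
functional of norm at most one that attains the norm of `f s`. -/
theorem sq_enorm_le_laverage_add_lintegral_mul_deriv (hab : a < b)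
    (hf : ContDiffOn ℝ 1 f (Icc a b)) (hs : s ∈ Icc a b) :
    ‖f s‖ₑ ^ 2 ≤ (⨍⁻ t in Icc a b, ‖f t‖ₑ ^ 2 ∂volume) +
      ∫⁻ t in Icc a b, 2 * (‖f t‖ₑ * ‖deriv f t‖ₑ) := by
  obtain ⟨l, hl, hls⟩ := exists_dual_vector'' ℝ (f s)
  have hl_le (x : E) : ‖l x‖ₑ ≤ ‖x‖ₑ :=
    enorm_le_iff_norm_le.2 ((l.le_of_opNorm_le hl x).trans_eq (one_mul _))
  have deriv_sq : ∀ t ∈ Ioo a b,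
      deriv (fun r => l (f r) ^ 2) t = 2 * (l (f t) * l (deriv f t)) := by
    intro t ht
    have hft : DifferentiableAt ℝ f t :=
      (hf.differentiableOn one_ne_zero).differentiableAt (Icc_mem_nhds ht.1 ht.2)
    simpa [mul_assoc] using ((l.hasFDerivAt.comp_hasDerivAt t hft.hasDerivAt).fun_pow 2).deriv
  calc ‖f s‖ₑ ^ 2 = ‖l (f s) ^ 2‖ₑ := by
        rw [hls, enorm_pow, RCLike.ofReal_real_eq_id, id, enorm_norm]
    _ ≤ (⨍⁻ t in Icc a b, ‖l (f t) ^ 2‖ₑ ∂volume) +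
          ∫⁻ t in Icc a b, ‖deriv (fun r => l (f r) ^ 2) t‖ₑ :=
        enorm_le_laverage_add_lintegral_deriv hab ((l.contDiff.comp_contDiffOn hf).pow 2) hs
    _ ≤ (⨍⁻ t in Icc a b, ‖f t‖ₑ ^ 2 ∂volume) +
          ∫⁻ t in Icc a b, 2 * (‖f t‖ₑ * ‖deriv f t‖ₑ) := by
        rw [← restrict_Ioo_eq_restrict_Icc]
        refine add_le_add (laverage_mono_ae (ae_of_all _ fun t => ?_))
          (setLIntegral_mono' measurableSet_Ioo fun t ht => ?_)
        · simpa only [enorm_pow] using pow_le_pow_left' (hl_le (f t)) 2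
        · rw [deriv_sq t ht, enorm_mul, enorm_mul, Real.enorm_eq_ofReal zero_le_two,
            ENNReal.ofReal_ofNat]
          gcongr <;> exact hl_le _

end Interval

section SobolevDensity

variable {V E : Type*} [NormedAddCommGroup V] [NormedSpace ℝ V] [NormedAddCommGroup E]
  [NormedSpace ℝ E] {f : V → E}

/-- The density `‖f‖² + 2‖f‖‖∇f‖`, with the operator norm of the derivative, whose integral over a
unit segment dominates `‖f‖²` on it. -/
noncomputable def sobolevDensity (f : V → E) (p : V) : ℝ≥0∞ :=
  ‖f p‖ₑ ^ 2 + 2 * (‖f p‖ₑ * ‖fderiv ℝ f p‖ₑ)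

theorem sq_enorm_le_lintegral_sobolevDensity (hf : ContDiff ℝ 1 f) (p : V) {e : V} (he : ‖e‖ ≤ 1)
    {s : ℝ} (hs : s ∈ Icc (0 : ℝ) 1) :
    ‖f (p + s • e)‖ₑ ^ 2 ≤ ∫⁻ t in Ioo (0 : ℝ) 1, sobolevDensity f (p + t • e) := by
  set g : ℝ → E := fun t => f (p + t • e)
  have hg : ContDiff ℝ 1 g := hf.comp (by fun_prop)
  have deriv_le (t : ℝ) : ‖deriv g t‖ₑ ≤ ‖fderiv ℝ f (p + t • e)‖ₑ := by
    have hline : HasDerivAt (fun t : ℝ => p + t • e) e t := by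
      simpa using ((hasDerivAt_id t).smul_const e).const_add p
    have hgt : HasDerivAt g (fderiv ℝ f (p + t • e) e) t :=
      (hf.differentiable one_ne_zero _).hasFDerivAt.comp_hasDerivAt t hline
    rw [hgt.deriv, enorm_le_iff_norm_le]
    exact ContinuousLinearMap.unit_le_opNorm _ _ he
  calc ‖g s‖ₑ ^ 2
      ≤ (⨍⁻ t in Icc (0 : ℝ) 1, ‖g t‖ₑ ^ 2 ∂volume) +
          ∫⁻ t in Icc (0 : ℝ) 1, 2 * (‖g t‖ₑ * ‖deriv g t‖ₑ) :=
        sq_enorm_le_laverage_add_lintegral_mul_deriv zero_lt_one hg.contDiffOn hs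
    _ = ∫⁻ t in Ioo (0 : ℝ) 1, (‖g t‖ₑ ^ 2 + 2 * (‖g t‖ₑ * ‖deriv g t‖ₑ)) := by
        rw [setLAverage_eq, Real.volume_Icc, sub_zero, ENNReal.ofReal_one, div_one,
          ← lintegral_add_left (hg.continuous.enorm.measurable.pow_const 2),
          restrict_Ioo_eq_restrict_Icc]
    _ ≤ ∫⁻ t in Ioo (0 : ℝ) 1, sobolevDensity f (p + t • e) := by
        unfold sobolevDensity
        gcongr with t
        exact deriv_le t

variable [MeasurableSpace V] [OpensMeasurableSpace V]

theorem measurable_sobolevDensity (hf : ContDiff ℝ 1 f) : Measurable (sobolevDensity f) := by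
  have hfm : Measurable fun p => ‖f p‖ₑ := hf.continuous.enorm.measurable
  have hfm' : Measurable fun p => ‖fderiv ℝ f p‖ₑ :=
    (hf.continuous_fderiv one_ne_zero).enorm.measurable
  exact (hfm.pow_const 2).add ((hfm.mul hfm').const_mul 2)

theorem lintegral_sobolevDensity_le (hf : ContDiff ℝ 1 f) (μ : Measure V) :
    ∫⁻ p, sobolevDensity f p ∂μ ≤
      2 * (eLpNorm f 2 μ * (eLpNorm f 2 μ + eLpNorm (fderiv ℝ f) 2 μ)) := by
  have hfm : Measurable fun p => ‖f p‖ₑ := hf.continuous.enorm.measurable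
  have hfm' : Measurable fun p => ‖fderiv ℝ f p‖ₑ :=
    (hf.continuous_fderiv one_ne_zero).enorm.measurable
  have cauchy_schwarz : ∫⁻ p, ‖f p‖ₑ * ‖fderiv ℝ f p‖ₑ ∂μ ≤
      eLpNorm f 2 μ * eLpNorm (fderiv ℝ f) 2 μ := by
    rw [← ENNReal.pow_le_pow_left_iff two_ne_zero, mul_pow, sq_eLpNorm_two, sq_eLpNorm_two]
    exact sq_lintegral_mul_le hfm.aemeasurable hfm'.aemeasurable
  calc ∫⁻ p, sobolevDensity f p ∂μ
      = eLpNorm f 2 μ ^ 2 + 2 * ∫⁻ p, ‖f p‖ₑ * ‖fderiv ℝ f p‖ₑ ∂μ := by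
        unfold sobolevDensity
        rw [lintegral_add_left (hfm.pow_const 2), lintegral_const_mul' 2 _ ENNReal.ofNat_ne_top,
          sq_eLpNorm_two]
    _ ≤ 2 * eLpNorm f 2 μ ^ 2 + 2 * (eLpNorm f 2 μ * eLpNorm (fderiv ℝ f) 2 μ) := by
        gcongr
        exact le_mul_of_one_le_left' one_le_two
    _ = 2 * (eLpNorm f 2 μ * (eLpNorm f 2 μ + eLpNorm (fderiv ℝ f) 2 μ)) := by ring

end SobolevDensity

section SlabMeasure

variable (h : ℝ)

theorem slabMeasure_eq_prod :
    slabMeasure h = (volume.restrict (Ioo (0 : ℝ) 1)).prod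
      ((volume.restrict (Ioo (0 : ℝ) 1)).prod (volume.restrict (Ioo (-h) 0))) := by
  rw [slabMeasure, Measure.prod_restrict, Measure.prod_restrict]
  rfl

theorem ae_slabMeasure_mem :
    ∀ᵐ p ∂slabMeasure h, p ∈ Icc (0 : ℝ) 1 ×ˢ Icc (0 : ℝ) 1 ×ˢ Icc (-h) 0 := by
  filter_upwards [ae_restrict_mem
    (measurableSet_Ioo.prod (measurableSet_Ioo.prod measurableSet_Ioo))] with p hp
  exact prod_mono Ioo_subset_Icc_self (prod_mono Ioo_subset_Icc_self Ioo_subset_Icc_self) hp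

instance isFiniteMeasure_slabMeasure : IsFiniteMeasure (slabMeasure h) := by
  rw [slabMeasure_eq_prod]
  infer_instance

theorem memLp_slabMeasure_of_continuous {E : Type*} [NormedAddCommGroup E]
    {f : ℝ × ℝ × ℝ → E} (hf : Continuous f) (p : ℝ≥0∞) : MemLp f p (slabMeasure h) := by
  obtain ⟨C, hC⟩ := (isCompact_Icc.prod
    (isCompact_Icc.prod isCompact_Icc)).exists_bound_of_continuousOn hf.continuousOn
  exact .of_bound hf.aestronglyMeasurable C ((ae_slabMeasure_mem h).mono hC)

end SlabMeasure

section Divergence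

variable {v : ℝ × ℝ × ℝ → ℝ × ℝ}

theorem divH_eq_fderiv_apply {p : ℝ × ℝ × ℝ} (hv : DifferentiableAt ℝ v p) :
    divH v p = (fderiv ℝ v p (1, 0, 0)).1 + (fderiv ℝ v p (0, 1, 0)).2 := by
  rw [divH, hv.hasFDerivAt.fst.fderiv, hv.hasFDerivAt.snd.fderiv]
  rfl

theorem continuous_divH (hv : ContDiff ℝ 1 v) : Continuous (divH v) := by
  have hdv : Continuous (fderiv ℝ v) := hv.continuous_fderiv one_ne_zero
  have divH_eq : divH v = fun p => (fderiv ℝ v p (1, 0, 0)).1 + (fderiv ℝ v p (0, 1, 0)).2 :=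
    funext fun p => divH_eq_fderiv_apply (hv.differentiable one_ne_zero p)
  rw [divH_eq]
  exact (hdv.clm_apply continuous_const).fst.add (hdv.clm_apply continuous_const).snd

theorem enorm_divH_le {p : ℝ × ℝ × ℝ} (hv : DifferentiableAt ℝ v p) :
    ‖divH v p‖ₑ ≤ 2 * ‖fderiv ℝ v p‖ₑ := by
  have fderiv_apply_le {e : ℝ × ℝ × ℝ} (he : ‖e‖ ≤ 1) : ‖fderiv ℝ v p e‖ ≤ ‖fderiv ℝ v p‖ :=
    (fderiv ℝ v p).unit_le_opNorm e he
  rw [divH_eq_fderiv_apply hv, two_mul]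
  refine (enorm_add_le _ _).trans (add_le_add ?_ ?_) <;> rw [enorm_le_iff_norm_le]
  · exact (norm_fst_le _).trans (fderiv_apply_le (by simp [Prod.norm_def]))
  · exact (norm_snd_le _).trans (fderiv_apply_le (by simp [Prod.norm_def]))

theorem sq_enorm_integral_divH_le (hv : ContDiff ℝ 1 v) {h z : ℝ} (hz : z ∈ Icc (-h) 0)
    (x y : ℝ) :
    ‖∫ ζ in (-h)..z, divH v (x, y, ζ)‖ₑ ^ 2 ≤
      4 * ENNReal.ofReal h * ∫⁻ ζ in Ioo (-h) 0, ‖fderiv ℝ v (x, y, ζ)‖ₑ ^ 2 := by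
  have hline : Continuous fun ζ => divH v (x, y, ζ) := (continuous_divH hv).comp (by fun_prop)
  calc ‖∫ ζ in (-h)..z, divH v (x, y, ζ)‖ₑ ^ 2
      ≤ ENNReal.ofReal h * ∫⁻ ζ in Ioo (-h) 0, ‖divH v (x, y, ζ)‖ₑ ^ 2 := by
        rw [restrict_Ioo_eq_restrict_Ioc]
        simpa using sq_enorm_intervalIntegral_le hline.aestronglyMeasurable hz
    _ ≤ ENNReal.ofReal h * ∫⁻ ζ in Ioo (-h) 0, (2 * ‖fderiv ℝ v (x, y, ζ)‖ₑ) ^ 2 := by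
        gcongr with ζ
        exact enorm_divH_le (hv.differentiable one_ne_zero _)
    _ = 4 * ENNReal.ofReal h * ∫⁻ ζ in Ioo (-h) 0, ‖fderiv ℝ v (x, y, ζ)‖ₑ ^ 2 := by
        simp_rw [mul_pow]
        rw [lintegral_const_mul' _ _ (by finiteness)]
        ring

theorem sq_enorm_integral_divH_le_lintegral_sobolevDensity (hv : ContDiff ℝ 2 v) {h y z : ℝ}
    (hy : y ∈ Icc (0 : ℝ) 1) (hz : z ∈ Icc (-h) 0) (x : ℝ) :
    ‖∫ ζ in (-h)..z, divH v (x, y, ζ)‖ₑ ^ 2 ≤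
      ∫⁻ q, 4 * ENNReal.ofReal h * sobolevDensity (fderiv ℝ v) (x, q)
        ∂(volume.restrict (Ioo (0 : ℝ) 1)).prod (volume.restrict (Ioo (-h) 0)) := by
  have hdv : ContDiff ℝ 1 (fderiv ℝ v) := hv.fderiv_right (by norm_num)
  have hD : Measurable fun q : ℝ × ℝ => sobolevDensity (fderiv ℝ v) (x, q) :=
    (measurable_sobolevDensity hdv).comp measurable_prodMk_left
  rw [lintegral_const_mul _ hD, lintegral_prod_symm' _ hD]
  refine (sq_enorm_integral_divH_le (hv.of_le (by norm_num)) hz x y).trans ?_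
  gcongr with ζ
  simpa using sq_enorm_le_lintegral_sobolevDensity hdv (x, 0, ζ) (e := (0, 1, 0))
    (by simp [Prod.norm_def]) hy

end Divergence

section AnisotropicEstimate

variable {v : ℝ × ℝ × ℝ → ℝ × ℝ} {φ ψ : ℝ × ℝ × ℝ → ℝ} {h : ℝ}

theorem sq_enorm_integral_divH_mul_mul_le_lintegral (hv : ContDiff ℝ 2 v) (hφ : ContDiff ℝ 1 φ)
    (hψ : AEStronglyMeasurable ψ (slabMeasure h)) :
    ‖∫ p, (∫ ζ in (-h)..(p.2.2), divH v (p.1, p.2.1, ζ)) * φ p * ψ p ∂slabMeasure h‖ₑ ^ 2 ≤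
      (∫⁻ p, 4 * ENNReal.ofReal h * sobolevDensity (fderiv ℝ v) p ∂slabMeasure h) *
        (∫⁻ p, sobolevDensity φ p ∂slabMeasure h) * eLpNorm ψ 2 (slabMeasure h) ^ 2 := by
  have hDv : Measurable (sobolevDensity (fderiv ℝ v)) :=
    measurable_sobolevDensity (hv.fderiv_right (by norm_num))
  have mem_slab := ae_slabMeasure_mem h
  calc _ ≤ (∫⁻ p, ‖∫ ζ in (-h)..(p.2.2), divH v (p.1, p.2.1, ζ)‖ₑ * ‖φ p‖ₑ * ‖ψ p‖ₑ
          ∂slabMeasure h) ^ 2 := by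
        gcongr
        simp_rw [← enorm_mul]
        exact enorm_integral_le_lintegral_enorm _
    _ ≤ _ := by
        rw [sq_eLpNorm_two]
        rw [slabMeasure_eq_prod] at hψ mem_slab ⊢
        refine sq_lintegral_mul_mul_le_of_sq_le_lintegral (hDv.const_mul _)
          (measurable_sobolevDensity hφ) hψ.enorm ?_ ?_
        · filter_upwards [mem_slab] with p ⟨_, hy, hz⟩
          exact sq_enorm_integral_divH_le_lintegral_sobolevDensity hv hy hz p.1
        · filter_upwards [mem_slab] with p ⟨hx, _⟩
          simpa using sq_enorm_le_lintegral_sobolevDensity hφ (0, p.2) (e := (1, 0))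
            (by simp [Prod.norm_def]) hx

theorem sq_enorm_integral_divH_mul_mul_le_eLpNorm (hv : ContDiff ℝ 2 v) (hφ : ContDiff ℝ 1 φ)
    (hψ : AEStronglyMeasurable ψ (slabMeasure h)) :
    ‖∫ p, (∫ ζ in (-h)..(p.2.2), divH v (p.1, p.2.1, ζ)) * φ p * ψ p ∂slabMeasure h‖ₑ ^ 2 ≤
      16 * ENNReal.ofReal h * eLpNorm (fderiv ℝ v) 2 (slabMeasure h) *
        (eLpNorm (fderiv ℝ v) 2 (slabMeasure h) +
          eLpNorm (fderiv ℝ (fderiv ℝ v)) 2 (slabMeasure h)) *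
        eLpNorm φ 2 (slabMeasure h) *
        (eLpNorm φ 2 (slabMeasure h) + eLpNorm (fderiv ℝ φ) 2 (slabMeasure h)) *
        eLpNorm ψ 2 (slabMeasure h) ^ 2 := by
  have hdv : ContDiff ℝ 1 (fderiv ℝ v) := hv.fderiv_right (by norm_num)
  refine (sq_enorm_integral_divH_mul_mul_le_lintegral hv hφ hψ).trans ?_
  rw [lintegral_const_mul _ (measurable_sobolevDensity hdv)]
  grw [lintegral_sobolevDensity_le hdv, lintegral_sobolevDensity_le hφ]
  exact le_of_eq (by ring)

theorem anisotropic_estimate_general (hh : 0 ≤ h) (hv : ContDiff ℝ 2 v) (hφ : ContDiff ℝ 1 φ)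
    (hψ : MemLp ψ 2 (slabMeasure h)) :
    |∫ p, (∫ ζ in (-h)..(p.2.2), divH v (p.1, p.2.1, ζ)) * φ p * ψ p ∂slabMeasure h| ≤
      4 * √h * (eLpNorm (fun p => ‖fderiv ℝ v p‖) 2 (slabMeasure h)).toReal ^ ((1 : ℝ) / 2) *
        ((eLpNorm (fun p => ‖fderiv ℝ v p‖) 2 (slabMeasure h)).toReal +
          (eLpNorm (fun p => ‖fderiv ℝ (fderiv ℝ v) p‖) 2 (slabMeasure h)).toReal) ^
          ((1 : ℝ) / 2) *
        (eLpNorm φ 2 (slabMeasure h)).toReal ^ ((1 : ℝ) / 2) *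
        ((eLpNorm φ 2 (slabMeasure h)).toReal +
          (eLpNorm (fun p => ‖fderiv ℝ φ p‖) 2 (slabMeasure h)).toReal) ^ ((1 : ℝ) / 2) *
        (eLpNorm ψ 2 (slabMeasure h)).toReal := by
  have hdv : ContDiff ℝ 1 (fderiv ℝ v) := hv.fderiv_right (by norm_num)
  have dv_ne_top := (memLp_slabMeasure_of_continuous h hdv.continuous 2).eLpNorm_ne_top
  have ddv_ne_top :=
    (memLp_slabMeasure_of_continuous h (hdv.continuous_fderiv one_ne_zero) 2).eLpNorm_ne_top
  have φ_ne_top := (memLp_slabMeasure_of_continuous h hφ.continuous 2).eLpNorm_ne_top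
  have dφ_ne_top :=
    (memLp_slabMeasure_of_continuous h (hφ.continuous_fderiv one_ne_zero) 2).eLpNorm_ne_top
  have ψ_ne_top := hψ.eLpNorm_ne_top
  have sq_le := ENNReal.toReal_mono (by finiteness)
    (sq_enorm_integral_divH_mul_mul_le_eLpNorm hv hφ hψ.1)
  simp only [ENNReal.toReal_mul, ENNReal.toReal_pow, ENNReal.toReal_add, ENNReal.toReal_ofReal hh,
    ENNReal.toReal_ofNat, toReal_enorm, Real.norm_eq_abs, sq_abs, ne_eq, dv_ne_top, ddv_ne_top,
    φ_ne_top, dφ_ne_top, not_false_eq_true] at sq_le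
  rw [eLpNorm_norm (fderiv ℝ v), eLpNorm_norm (fderiv ℝ (fderiv ℝ v)), eLpNorm_norm (fderiv ℝ φ)]
  simp only [← Real.sqrt_eq_rpow]
  refine abs_le_of_sq_le_sq (sq_le.trans_eq ?_) (by positivity)
  simp only [mul_pow, Real.sq_sqrt, ENNReal.toReal_nonneg, add_nonneg, hh]
  norm_num

end AnisotropicEstimate

/-- The anisotropic estimate of Lemma 2.3 of the paper:
`│∫_Ω (∫_{−h}^{z} ∇₂·v dζ) φ ψ│ ≤ C ‖∇v‖^{1/2}‖∇v‖_{H¹}^{1/2}‖φ‖^{1/2}‖φ‖_{H¹}^{1/2}‖ψ‖`. -/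
theorem anisotropic_estimate (h : ℝ) (hh : 0 < h) :
    ∃ C : ℝ, 0 < C ∧
      ∀ (v : ℝ × ℝ × ℝ → ℝ × ℝ) (φ ψ : ℝ × ℝ × ℝ → ℝ),
        ContDiff ℝ (⊤ : ℕ∞) v → ContDiff ℝ (⊤ : ℕ∞) φ → ContDiff ℝ (⊤ : ℕ∞) ψ →
        HorizontallyPeriodic v → HorizontallyPeriodic φ → HorizontallyPeriodic ψ →
        |∫ p, (∫ ζ in (-h)..(p.2.2), divH v (p.1, p.2.1, ζ)) * φ p * ψ p
            ∂slabMeasure h| ≤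
          C * (eLpNorm (fun p => ‖fderiv ℝ v p‖) 2 (slabMeasure h)).toReal ^ ((1 : ℝ) / 2) *
            ((eLpNorm (fun p => ‖fderiv ℝ v p‖) 2 (slabMeasure h)).toReal +
              (eLpNorm (fun p => ‖fderiv ℝ (fderiv ℝ v) p‖) 2 (slabMeasure h)).toReal) ^
              ((1 : ℝ) / 2) *
            (eLpNorm φ 2 (slabMeasure h)).toReal ^ ((1 : ℝ) / 2) *
            ((eLpNorm φ 2 (slabMeasure h)).toReal +
              (eLpNorm (fun p => ‖fderiv ℝ φ p‖) 2 (slabMeasure h)).toReal) ^ ((1 : ℝ) / 2) *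
            (eLpNorm ψ 2 (slabMeasure h)).toReal :=
  ⟨4 * √h, by positivity, fun v φ ψ hv hφ hψ _ _ _ =>
    anisotropic_estimate_general hh.le (contDiff_infty.1 hv 2) (contDiff_infty.1 hφ 1)
      (memLp_slabMeasure_of_continuous h hψ.continuous 2)⟩
end

section
/- Let Y : [0, ∞) → [0, ∞) be locally absolutely continuous and let α, β : [0, ∞) → ℝ be locally integrable functions such that dY/dt + α(t) Y(t) ≤ β(t) for almost every t ∈ (0, ∞). Suppose there exist τ > 0 and γ > 0 such that liminf_{t → ∞} ∫_t^{t+τ} α(s) ds ≥ γ, limsup_{t → ∞} ∫_t^{t+τ} α⁻(s) ds < ∞, and lim_{t → ∞} ∫_t^{t+τ} β⁺(s) ds = 0, where α⁻ = max{−α, 0} and β⁺ = max{β, 0}. Then Y(t) → 0 as t → ∞. -/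
open MeasureTheory Filter

/-!
On a window `[t, t + τ]` with `t` large, the integrating factor `exp (-∫ₓˢ α)` turns the
differential inequality into `Y s ≤ exp (-∫ₜˢ α) * Y t + exp (∫ α⁻) * ∫ β⁺`. The bound on `∫ α⁻`
keeps both exponentials bounded throughout the window, and at `s = t + τ` the first one is at most
`exp (-γ / 2) < 1`. Hence, along each arithmetic progression of step `τ`, `Y` is contracted by a
fixed factor up to an error tending to zero, while between the points of the progression it grows
by at most a fixed factor.
-/

theorem absolutelyContinuousOnInterval_congr {X : Type*} [PseudoMetricSpace X] {f g : ℝ → X}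
    {a b : ℝ} (hf : AbsolutelyContinuousOnInterval f a b) (hfg : Set.EqOn f g (Set.uIcc a b)) :
    AbsolutelyContinuousOnInterval g a b := by
  refine Tendsto.congr' ?_ hf
  filter_upwards [mem_inf_of_right (mem_principal_self _)] with E hE
  exact Finset.sum_congr rfl fun i hi => by rw [hfg (hE.1 i hi).1, hfg (hE.1 i hi).2]

theorem absolutelyContinuousOnInterval_of_eq_add_integral {f f' : ℝ → ℝ} {a b : ℝ}
    (hf' : IntervalIntegrable f' volume a b)
    (hf : ∀ x ∈ Set.uIcc a b, f x = f a + ∫ s in a..x, f' s) :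
    AbsolutelyContinuousOnInterval f a b := by
  have hconst : AbsolutelyContinuousOnInterval (fun _ => f a) a b :=
    contDiff_const.contDiffOn.absolutelyContinuousOnInterval
  exact absolutelyContinuousOnInterval_congr
    (hconst.add (hf'.absolutelyContinuousOnInterval_intervalIntegral Set.left_mem_uIcc))
    fun x hx => (hf x hx).symm

theorem ae_deriv_eq_of_eq_add_integral {f f' : ℝ → ℝ} {a b : ℝ}
    (hf' : IntervalIntegrable f' volume a b)
    (hf : ∀ x ∈ Set.Icc a b, f x = f a + ∫ s in a..x, f' s) :
    ∀ᵐ x ∂volume.restrict (Set.Icc a b), deriv f x = f' x := by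
  rw [← restrict_Ioo_eq_restrict_Icc]
  refine (ae_restrict_iff' measurableSet_Ioo).2 ?_
  filter_upwards [hf'.ae_hasDerivAt_integral] with x hx hxab
  have hprim : HasDerivAt (fun x => f a + ∫ s in a..x, f' s) (f' x) x :=
    (hx (Set.Icc_subset_uIcc (Set.Ioo_subset_Icc_self hxab)) a Set.left_mem_uIcc).const_add _
  refine (hprim.congr_of_eventuallyEq ?_).deriv
  filter_upwards [Icc_mem_nhds hxab.1 hxab.2] with z hz using hf z hz

theorem absolutelyContinuousOnInterval_comp_of_lipschitzOnWith {X Z : Type*} [PseudoMetricSpace X]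
    [PseudoMetricSpace Z] {g : X → Z} {f : ℝ → X} {a b : ℝ} {K : NNReal}
    (hg : LipschitzOnWith K g (f '' Set.uIcc a b)) (hf : AbsolutelyContinuousOnInterval f a b) :
    AbsolutelyContinuousOnInterval (fun x => g (f x)) a b := by
  have hsum : Tendsto
      (fun E : ℕ × (ℕ → ℝ × ℝ) => K * ∑ i ∈ Finset.range E.1, dist (f (E.2 i).1) (f (E.2 i).2))
      (AbsolutelyContinuousOnInterval.totalLengthFilter ⊓
        𝓟 (AbsolutelyContinuousOnInterval.disjWithin a b)) (nhds 0) := by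
    simpa only [mul_zero] using Tendsto.const_mul (K : ℝ) hf
  refine squeeze_zero' (Eventually.of_forall fun E => Finset.sum_nonneg fun i _ => dist_nonneg)
    ?_ hsum
  filter_upwards [mem_inf_of_right (mem_principal_self _)] with E hE
  rw [Finset.mul_sum]
  exact Finset.sum_le_sum fun i hi => hg.dist_le_mul _ (Set.mem_image_of_mem f (hE.1 i hi).1) _
    (Set.mem_image_of_mem f (hE.1 i hi).2)

section PositivePart

variable {f : ℝ → ℝ} {μ : Measure ℝ} {a b r t : ℝ}

theorem intervalIntegrable_max_zero (hf : IntervalIntegrable f μ a b) :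
    IntervalIntegrable (fun s => max (f s) 0) μ a b :=
  ⟨hf.1.pos_part, hf.2.pos_part⟩

theorem integral_le_integral_max_zero (har : a ≤ r) (hrt : r ≤ t) (htb : t ≤ b)
    (hf : IntervalIntegrable f μ a b) :
    ∫ s in r..t, f s ∂μ ≤ ∫ s in a..b, max (f s) 0 ∂μ := by
  have hsub : Set.uIcc r t ⊆ Set.uIcc a b := by
    rw [Set.uIcc_of_le hrt, Set.uIcc_of_le (har.trans (hrt.trans htb))]
    exact Set.Icc_subset_Icc har htb
  have hf_rt : IntervalIntegrable f μ r t := hf.mono_set hsub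
  calc ∫ s in r..t, f s ∂μ ≤ ∫ s in r..t, max (f s) 0 ∂μ :=
        intervalIntegral.integral_mono hrt hf_rt (intervalIntegrable_max_zero hf_rt)
          fun s => le_max_left _ _
    _ ≤ ∫ s in a..b, max (f s) 0 ∂μ :=
        intervalIntegral.integral_mono_interval har hrt htb
          (Eventually.of_forall fun s => le_max_right _ _) (intervalIntegrable_max_zero hf)

theorem neg_integral_le_integral_max_neg_zero (har : a ≤ r) (hrt : r ≤ t) (htb : t ≤ b)
    (hf : IntervalIntegrable f μ a b) :
    -∫ s in r..t, f s ∂μ ≤ ∫ s in a..b, max (-f s) 0 ∂μ := by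
  rw [← intervalIntegral.integral_neg]
  exact integral_le_integral_max_zero har hrt htb hf.neg

end PositivePart

section IntegratingFactor

variable {α β y : ℝ → ℝ} {a b c : ℝ}

theorem absolutelyContinuousOnInterval_exp_neg_integral (hα : IntervalIntegrable α volume a b) :
    AbsolutelyContinuousOnInterval (fun x => Real.exp (-∫ s in x..b, α s)) a b := by
  have hprim : AbsolutelyContinuousOnInterval (fun x => -∫ s in x..b, α s) a b := by
    simpa only [← intervalIntegral.integral_symm] using
      hα.absolutelyContinuousOnInterval_intervalIntegral Set.right_mem_uIcc
  obtain ⟨K, hK⟩ :=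
    Real.contDiff_exp.locallyLipschitz.locallyLipschitzOn.exists_lipschitzOnWith_of_compact
      (isCompact_uIcc.image_of_continuousOn hprim.continuousOn)
  exact absolutelyContinuousOnInterval_comp_of_lipschitzOnWith hK hprim

theorem ae_hasDerivAt_exp_neg_integral (hα : IntervalIntegrable α volume a b) :
    ∀ᵐ x, x ∈ Set.uIcc a b → HasDerivAt (fun x => Real.exp (-∫ s in x..b, α s))
      (Real.exp (-∫ s in x..b, α s) * α x) x := by
  filter_upwards [hα.ae_hasDerivAt_integral] with x hx hxab
  simpa only [← intervalIntegral.integral_symm] using (hx hxab b Set.right_mem_uIcc).exp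

theorem le_exp_neg_integral_mul_add_integral (hab : a ≤ b)
    (hy : AbsolutelyContinuousOnInterval y a b) (hα : IntervalIntegrable α volume a b)
    (hβ : IntervalIntegrable β volume a b)
    (hode : ∀ᵐ x ∂volume.restrict (Set.Icc a b), deriv y x + α x * y x ≤ β x) :
    y b ≤ Real.exp (-∫ s in a..b, α s) * y a +
      ∫ x in a..b, Real.exp (-∫ s in x..b, α s) * β x := by
  set E : ℝ → ℝ := fun x => Real.exp (-∫ s in x..b, α s)
  have hE : AbsolutelyContinuousOnInterval E a b :=
    absolutelyContinuousOnInterval_exp_neg_integral hα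
  have hE' : ∀ᵐ x ∂volume.restrict (Set.Icc a b), deriv E x = E x * α x := by
    refine (ae_restrict_iff' measurableSet_Icc).2 ?_
    filter_upwards [ae_hasDerivAt_exp_neg_integral hα] with x hx hxab
    exact (hx (Set.Icc_subset_uIcc hxab)).deriv
  have hderiv : ∀ᵐ x ∂volume.restrict (Set.Icc a b),
      deriv E x * y x + E x * deriv y x ≤ E x * β x := by
    filter_upwards [hE', hode] with x hEx hx
    calc deriv E x * y x + E x * deriv y x = E x * (deriv y x + α x * y x) := by rw [hEx]; ring
      _ ≤ E x * β x := mul_le_mul_of_nonneg_left hx (Real.exp_pos _).le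
  have hmono : ∫ x in a..b, (deriv E x * y x + E x * deriv y x) ≤ ∫ x in a..b, E x * β x :=
    intervalIntegral.integral_mono_ae_restrict hab
      ((hE.intervalIntegrable_deriv.mul_continuousOn hy.continuousOn).add
        (hy.intervalIntegrable_deriv.continuousOn_mul hE.continuousOn))
      (hβ.continuousOn_mul hE.continuousOn) hderiv
  have hEb : E b = 1 := by simp [E]
  rw [hE.integral_deriv_mul_eq_sub hy, hEb, one_mul] at hmono
  exact sub_le_iff_le_add'.1 hmono

theorem le_exp_neg_integral_mul_add_exp_mul_integral_max_zero {M : ℝ} (hab : a ≤ b) (hbc : b ≤ c)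
    (hy : AbsolutelyContinuousOnInterval y a c) (hα : IntervalIntegrable α volume a c)
    (hβ : IntervalIntegrable β volume a c)
    (hode : ∀ᵐ x ∂volume.restrict (Set.Icc a c), deriv y x + α x * y x ≤ β x)
    (hM : ∫ s in a..c, max (-α s) 0 ≤ M) :
    y b ≤ Real.exp (-∫ s in a..b, α s) * y a + Real.exp M * ∫ s in a..c, max (β s) 0 := by
  have hsub : Set.uIcc a b ⊆ Set.uIcc a c :=
    Set.uIcc_subset_uIcc_left (Set.mem_uIcc_of_le hab hbc)
  have hα_ab : IntervalIntegrable α volume a b := hα.mono_set hsub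
  have hβ_ab : IntervalIntegrable β volume a b := hβ.mono_set hsub
  have hode_ab : ∀ᵐ x ∂volume.restrict (Set.Icc a b), deriv y x + α x * y x ≤ β x :=
    ae_restrict_of_ae_restrict_of_subset (Set.Icc_subset_Icc_right hbc) hode
  have hneg : ∀ x ∈ Set.Icc a b, -∫ s in x..b, α s ≤ M := fun x hx =>
    (neg_integral_le_integral_max_neg_zero hx.1 hx.2 hbc hα).trans hM
  have hforce : ∫ x in a..b, Real.exp (-∫ s in x..b, α s) * β x ≤
      Real.exp M * ∫ s in a..c, max (β s) 0 := by
    calc ∫ x in a..b, Real.exp (-∫ s in x..b, α s) * β x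
        ≤ ∫ x in a..b, Real.exp M * max (β x) 0 := by
          refine intervalIntegral.integral_mono_on hab (hβ_ab.continuousOn_mul
            (absolutelyContinuousOnInterval_exp_neg_integral hα_ab).continuousOn)
            ((intervalIntegrable_max_zero hβ_ab).const_mul _) fun x hx => ?_
          exact mul_le_mul_of_nonneg (Real.exp_le_exp.2 (hneg x hx)) (le_max_left _ _)
            (Real.exp_pos _).le (le_max_right _ _)
      _ = Real.exp M * ∫ x in a..b, max (β x) 0 := intervalIntegral.integral_const_mul _ _
      _ ≤ Real.exp M * ∫ x in a..c, max (β x) 0 := by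
          gcongr
          exact intervalIntegral.integral_mono_interval le_rfl hab hbc
            (Eventually.of_forall fun s => le_max_right _ _) (intervalIntegrable_max_zero hβ)
  exact (le_exp_neg_integral_mul_add_integral hab (hy.mono hsub) hα_ab hβ_ab hode_ab).trans
    (add_le_add_right hforce _)

end IntegratingFactor

theorem tendsto_zero_of_le_mul_add {u d : ℕ → ℝ} {q : ℝ} (hq0 : 0 ≤ q) (hq1 : q < 1)
    (hu : ∀ n, 0 ≤ u n) (hd : Tendsto d atTop (nhds 0)) (hle : ∀ n, u (n + 1) ≤ q * u n + d n) :
    Tendsto u atTop (nhds 0) := by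
  refine tendsto_order.2 ⟨fun ε hε => Eventually.of_forall fun n => hε.trans_le (hu n),
    fun ε hε => ?_⟩
  obtain ⟨N, hN⟩ := eventually_atTop.1
    (hd.eventually_le_const (mul_pos (sub_pos.2 hq1) (half_pos hε)))
  -- Subtracting the fixed point `ε / 2` of `x ↦ q * x + (1 - q) * (ε / 2)` makes the recursive
  -- inequality homogeneous.
  have hstep : ∀ k, u (k + 1 + N) - ε / 2 ≤ q * (u (k + N) - ε / 2) := fun k => by
    rw [Nat.add_right_comm]
    linarith [hle (k + N), hN (k + N) (Nat.le_add_left N k)]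
  have hgeom : ∀ k, u (k + N) - ε / 2 ≤ q ^ k * (u N - ε / 2) := fun k => by
    simpa only [zero_add] using
      le_geom (u := fun k => u (k + N) - ε / 2) hq0 k fun j _ => hstep j
  have hpow : Tendsto (fun k : ℕ => q ^ k * (u N - ε / 2)) atTop (nhds 0) := by
    simpa only [zero_mul] using (tendsto_pow_atTop_nhds_zero_of_lt_one hq0 hq1).mul_const _
  rw [← map_add_atTop_eq_nat N, eventually_map]
  filter_upwards [hpow.eventually_lt_const (half_pos hε)] with k hk
  linarith [hgeom k]

theorem tendsto_zero_of_eventually_le_mul_add {Y d : ℝ → ℝ} {τ q B : ℝ} (hτ : 0 < τ)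
    (hq0 : 0 ≤ q) (hq1 : q < 1) (hY : ∀ᶠ t in atTop, 0 ≤ Y t) (hd : Tendsto d atTop (nhds 0))
    (hcontr : ∀ᶠ t in atTop, Y (t + τ) ≤ q * Y t + d t)
    (hgrow : ∀ᶠ t in atTop, ∀ s ∈ Set.Icc t (t + τ), Y s ≤ B * Y t + d t) :
    Tendsto Y atTop (nhds 0) := by
  obtain ⟨T, hT⟩ := eventually_atTop.1 (hY.and (hcontr.and hgrow))
  have hgrid : ∀ n : ℕ, T ≤ T + n * τ := fun n => le_add_of_nonneg_right (by positivity)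
  have hgrid_top : Tendsto (fun n : ℕ => T + n * τ) atTop atTop :=
    tendsto_atTop_add_const_left _ T (tendsto_natCast_atTop_atTop.atTop_mul_const hτ)
  have hd_grid : Tendsto (fun n : ℕ => d (T + n * τ)) atTop (nhds 0) := hd.comp hgrid_top
  have hY_grid : Tendsto (fun n : ℕ => Y (T + n * τ)) atTop (nhds 0) := by
    refine tendsto_zero_of_le_mul_add hq0 hq1 (fun n => (hT _ (hgrid n)).1) hd_grid fun n => ?_
    have hnext : T + ((n + 1 : ℕ) : ℝ) * τ = T + n * τ + τ := by push_cast; ring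
    rw [hnext]
    exact (hT _ (hgrid n)).2.1
  have hbound : Tendsto (fun n : ℕ => B * Y (T + n * τ) + d (T + n * τ)) atTop (nhds 0) := by
    simpa only [mul_zero, add_zero] using (hY_grid.const_mul B).add hd_grid
  have hfloor : Tendsto (fun t : ℝ => ⌊(t - T) / τ⌋₊) atTop atTop :=
    tendsto_nat_floor_atTop.comp
      ((tendsto_atTop_add_const_right _ (-T) tendsto_id).atTop_div_const hτ)
  refine squeeze_zero' hY ?_ (hbound.comp hfloor)
  filter_upwards [eventually_ge_atTop T] with t ht
  have hle : ⌊(t - T) / τ⌋₊ * τ ≤ t - T :=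
    (le_div_iff₀ hτ).1 (Nat.floor_le (div_nonneg (sub_nonneg.2 ht) hτ.le))
  have hlt : t - T < (⌊(t - T) / τ⌋₊ + 1) * τ := (div_lt_iff₀ hτ).1 (Nat.lt_floor_add_one _)
  exact (hT _ (hgrid _)).2.2 t ⟨by linarith, by linarith⟩

theorem tendsto_zero_of_ae_deriv_add_mul_le {y α β : ℝ → ℝ} {τ γ M : ℝ} (hτ : 0 < τ) (hγ : 0 < γ)
    (hy0 : ∀ᶠ t in atTop, 0 ≤ y t)
    (hy : ∀ᶠ t in atTop, AbsolutelyContinuousOnInterval y t (t + τ))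
    (hα : ∀ᶠ t in atTop, IntervalIntegrable α volume t (t + τ))
    (hβ : ∀ᶠ t in atTop, IntervalIntegrable β volume t (t + τ))
    (hode : ∀ᶠ t in atTop, ∀ᵐ x ∂volume.restrict (Set.Icc t (t + τ)),
      deriv y x + α x * y x ≤ β x)
    (hαγ : ∀ᶠ t in atTop, γ ≤ ∫ s in t..(t + τ), α s)
    (hαM : ∀ᶠ t in atTop, ∫ s in t..(t + τ), max (-α s) 0 ≤ M)
    (hβ0 : Tendsto (fun t => ∫ s in t..(t + τ), max (β s) 0) atTop (nhds 0)) :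
    Tendsto y atTop (nhds 0) := by
  have herror : Tendsto (fun t => Real.exp M * ∫ s in t..(t + τ), max (β s) 0) atTop (nhds 0) := by
    simpa only [mul_zero] using hβ0.const_mul (Real.exp M)
  have hwindow : ∀ᶠ t in atTop, ∀ s ∈ Set.Icc t (t + τ),
      y s ≤ Real.exp (-∫ r in t..s, α r) * y t +
        Real.exp M * ∫ r in t..(t + τ), max (β r) 0 := by
    filter_upwards [hy, hα, hβ, hode, hαM] with t hyt hαt hβt hodet hMt s hs
    exact le_exp_neg_integral_mul_add_exp_mul_integral_max_zero hs.1 hs.2 hyt hαt hβt hodet hMt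
  refine tendsto_zero_of_eventually_le_mul_add (q := Real.exp (-γ)) (B := Real.exp M) hτ
    (Real.exp_pos _).le (Real.exp_lt_one_iff.2 (neg_neg_of_pos hγ)) hy0 herror ?_ ?_
  · filter_upwards [hy0, hwindow, hαγ] with t hy0t hwin hγt
    exact (hwin (t + τ) ⟨le_add_of_nonneg_right hτ.le, le_rfl⟩).trans (by gcongr)
  · filter_upwards [hy0, hwindow, hα, hαM] with t hy0t hwin hαt hMt s hs
    have hlower : -∫ r in t..s, α r ≤ M :=
      (neg_integral_le_integral_max_neg_zero le_rfl hs.1 hs.2 hαt).trans hMt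
    exact (hwin s hs).trans (by gcongr)

/-- The generalized Grönwall inequality (Lemma 2.4 of the paper).  The locally
absolutely continuous function `Y : [0,∞) → [0,∞)` is encoded by a locally integrable
a.e. derivative `Y'` together with the fundamental theorem of calculus identity
`Y t = Y 0 + ∫₀ᵗ Y'`. -/
theorem generalized_gronwall
    (Y Y' α β : ℝ → ℝ)
    (hYnonneg : ∀ t : ℝ, 0 ≤ t → 0 ≤ Y t)
    (hY'int : ∀ a b : ℝ, IntervalIntegrable Y' volume a b)
    (hYac : ∀ t : ℝ, 0 ≤ t → Y t = Y 0 + ∫ s in (0 : ℝ)..t, Y' s)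
    (hαint : ∀ a b : ℝ, IntervalIntegrable α volume a b)
    (hβint : ∀ a b : ℝ, IntervalIntegrable β volume a b)
    (hode : ∀ᵐ t ∂volume.restrict (Set.Ioi (0 : ℝ)), Y' t + α t * Y t ≤ β t)
    (τ γ : ℝ) (hτ : 0 < τ) (hγ : 0 < γ)
    (hliminf : ∀ ε > (0 : ℝ), ∀ᶠ t in atTop, γ - ε ≤ ∫ s in t..(t + τ), α s)
    (hlimsup : ∃ M : ℝ, ∀ᶠ t in atTop, (∫ s in t..(t + τ), max (-α s) 0) ≤ M)
    (hβlim : Tendsto (fun t => ∫ s in t..(t + τ), max (β s) 0) atTop (nhds 0)) :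
    Tendsto Y atTop (nhds 0) := by
  obtain ⟨M, hM⟩ := hlimsup
  have hY : ∀ t ≥ 0, ∀ x ∈ Set.Icc t (t + τ), Y x = Y t + ∫ s in t..x, Y' s := by
    intro t ht x hx
    rw [hYac x (ht.trans hx.1), hYac t ht, add_assoc,
      intervalIntegral.integral_add_adjacent_intervals (hY'int 0 t) (hY'int t x)]
  have hαγ : ∀ᶠ t in atTop, γ / 2 ≤ ∫ s in t..(t + τ), α s := by
    simpa only [sub_half] using hliminf (γ / 2) (half_pos hγ)
  refine tendsto_zero_of_ae_deriv_add_mul_le hτ (half_pos hγ)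
    ((eventually_ge_atTop 0).mono hYnonneg) ?_ (Eventually.of_forall fun t => hαint t (t + τ))
    (Eventually.of_forall fun t => hβint t (t + τ)) ?_ hαγ hM hβlim
  · filter_upwards [eventually_ge_atTop 0] with t ht
    refine absolutelyContinuousOnInterval_of_eq_add_integral (hY'int _ _) ?_
    simpa only [Set.uIcc_of_le (le_add_of_nonneg_right hτ.le)] using hY t ht
  · filter_upwards [eventually_gt_atTop 0] with t ht
    have hode_t : ∀ᵐ x ∂volume.restrict (Set.Icc t (t + τ)), Y' x + α x * Y x ≤ β x :=
      ae_restrict_of_ae_restrict_of_subset (fun x hx => ht.trans_le hx.1) hode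
    filter_upwards [hode_t, ae_deriv_eq_of_eq_add_integral (hY'int _ _) (hY t ht.le)] with x hx hYx
    rwa [hYx]
end

section
/- Let Ω = 𝕋² × (−h, 0) with 𝕋² = ℝ²/ℤ² and h > 0. There exists a constant C > 0 (independent of h and f) such that for every C¹ function f : 𝕋² × [−h, 0] → ℝ, ‖ ∫_{−h}^{0} |f(·, ·, z)| dz ‖_{L⁴(𝕋²)} ≤ C h^{1/2} ‖f‖_{L²(Ω)}^{1/2} ( ‖f‖_{L²(Ω)} + ‖∇₂ f‖_{L²(Ω)} )^{1/2}. -/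
open MeasureTheory

/-- The measure on the fundamental domain `(0,1)²` of the torus `𝕋² = ℝ²/ℤ²`. -/
noncomputable def torus2Measure : Measure (ℝ × ℝ) :=
  volume.restrict (Set.Ioo (0 : ℝ) 1 ×ˢ Set.Ioo (0 : ℝ) 1)

/-!
The Cauchy–Schwarz inequality in `z` reduces the estimate to bounding the `L²(𝕋²)` norm of
`Φ(x, y) = ∫ |f(x, y, z)|² dz`. The fundamental theorem of calculus for `|f|²`, averaged over the
base point, bounds `|f|²` at any point of a unit segment by the integral of `|f|² + 2 |f| |∂f|` over
that segment. Used along `x` this gives `Φ(x, y) ≤ A(y)`, used along `y` it gives `Φ(x, y) ≤ B(x)`,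
so `∫ Φ² ≤ (∫ A) (∫ B)`, and a last Cauchy–Schwarz bounds each factor by
`2 ‖f‖₂ (‖f‖₂ + ‖∇₂ f‖₂)`.
-/

open Set
open scoped ENNReal

section Lp

variable {α : Type*} [MeasurableSpace α] {μ : Measure α}

lemma eLpNorm_natCast_pow_eq_lintegral {ε : Type*} [ENorm ε] {n : ℕ} (hn : n ≠ 0) (f : α → ε) :
    eLpNorm f n μ ^ n = ∫⁻ x, ‖f x‖ₑ ^ n ∂μ := by
  simpa using eLpNorm_nnreal_pow_eq_lintegral (f := f) (μ := μ) (p := n) (by exact_mod_cast hn)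

variable {E F : Type*} [NormedAddCommGroup E] [NormedAddCommGroup F] {f : α → E} {g : α → F}

lemma sq_lintegral_enorm_le (hf : AEStronglyMeasurable f μ) :
    (∫⁻ x, ‖f x‖ₑ ∂μ) ^ 2 ≤ μ univ * ∫⁻ x, ‖f x‖ₑ ^ 2 ∂μ := by
  have hle := eLpNorm_le_eLpNorm_mul_rpow_measure_univ (p := 1) (q := 2) (by norm_num) hf
  calc (∫⁻ x, ‖f x‖ₑ ∂μ) ^ 2
      ≤ (eLpNorm f 2 μ * μ univ ^ (1 / 2 : ℝ)) ^ 2 := by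
        rw [← eLpNorm_one_eq_lintegral_enorm]
        gcongr
        exact hle.trans_eq (by norm_num)
    _ = μ univ * ∫⁻ x, ‖f x‖ₑ ^ 2 ∂μ := by
        rw [← eLpNorm_natCast_pow_eq_lintegral two_ne_zero, mul_pow, ← ENNReal.rpow_mul_natCast,
          mul_comm]
        norm_num

lemma lintegral_enorm_mul_enorm_le_eLpNorm_mul_eLpNorm (hf : AEStronglyMeasurable f μ)
    (hg : AEStronglyMeasurable g μ) :
    ∫⁻ x, ‖f x‖ₑ * ‖g x‖ₑ ∂μ ≤ eLpNorm f 2 μ * eLpNorm g 2 μ := by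
  simpa [eLpNorm_eq_lintegral_rpow_enorm_toReal two_ne_zero ENNReal.ofNat_ne_top] using
    ENNReal.lintegral_mul_le_Lp_mul_Lq μ Real.HolderConjugate.two_two hf.enorm hg.enorm

lemma lintegral_enorm_sq_add_two_mul_le (hf : AEStronglyMeasurable f μ)
    (hg : AEStronglyMeasurable g μ) :
    ∫⁻ x, (‖f x‖ₑ ^ 2 + 2 * (‖f x‖ₑ * ‖g x‖ₑ)) ∂μ ≤
      2 * (eLpNorm f 2 μ * (eLpNorm f 2 μ + eLpNorm g 2 μ)) := by
  calc ∫⁻ x, (‖f x‖ₑ ^ 2 + 2 * (‖f x‖ₑ * ‖g x‖ₑ)) ∂μ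
      = eLpNorm f 2 μ ^ 2 + 2 * ∫⁻ x, ‖f x‖ₑ * ‖g x‖ₑ ∂μ := by
        rw [lintegral_add_left' (hf.enorm.pow_const 2), lintegral_const_mul' _ _ (by simp),
          ← eLpNorm_natCast_pow_eq_lintegral two_ne_zero, Nat.cast_ofNat]
    _ ≤ 2 * eLpNorm f 2 μ ^ 2 + 2 * (eLpNorm f 2 μ * eLpNorm g 2 μ) :=
        add_le_add (le_mul_of_one_le_left' one_le_two)
          (by gcongr; exact lintegral_enorm_mul_enorm_le_eLpNorm_mul_eLpNorm hf hg)
    _ = 2 * (eLpNorm f 2 μ * (eLpNorm f 2 μ + eLpNorm g 2 μ)) := by ring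

end Lp

section Product

variable {α β γ : Type*} [MeasurableSpace α] [MeasurableSpace β] [MeasurableSpace γ]
  {μ : Measure α} {ν : Measure β} {κ : Measure γ} [SFinite ν]

lemma lintegral_sq_le_lintegral_mul_lintegral {φ : α × β → ℝ≥0∞} {A : β → ℝ≥0∞} {B : α → ℝ≥0∞}
    (hA : AEMeasurable A ν) (hB : AEMeasurable B μ)
    (hφA : ∀ᵐ x ∂μ, ∀ y, φ (x, y) ≤ A y) (hφB : ∀ᵐ y ∂ν, ∀ x, φ (x, y) ≤ B x) :
    ∫⁻ p, φ p ^ 2 ∂μ.prod ν ≤ (∫⁻ x, B x ∂μ) * ∫⁻ y, A y ∂ν := by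
  rw [← lintegral_prod_mul hB hA]
  refine lintegral_mono_ae ?_
  filter_upwards [Measure.quasiMeasurePreserving_fst.ae hφA,
    Measure.quasiMeasurePreserving_snd.ae hφB] with p hpA hpB
  rw [sq]
  exact mul_le_mul' (hpB p.1) (hpA p.2)

lemma lintegral_sq_lintegral_le [SFinite μ] [SFinite κ] {φ u v : α × β × γ → ℝ≥0∞}
    (hu : Measurable u) (hv : Measurable v)
    (hφu : ∀ᵐ x ∂μ, ∀ y z, φ (x, y, z) ≤ ∫⁻ s, u (s, y, z) ∂μ)
    (hφv : ∀ᵐ y ∂ν, ∀ x z, φ (x, y, z) ≤ ∫⁻ t, v (x, t, z) ∂ν) :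
    ∫⁻ p, (∫⁻ z, φ (p.1, p.2, z) ∂κ) ^ 2 ∂μ.prod ν ≤
      (∫⁻ q, u q ∂μ.prod (ν.prod κ)) * ∫⁻ q, v q ∂μ.prod (ν.prod κ) := by
  have hu_int : ∫⁻ q, u q ∂μ.prod (ν.prod κ) = ∫⁻ y, ∫⁻ z, ∫⁻ s, u (s, y, z) ∂μ ∂κ ∂ν := by
    rw [lintegral_prod_symm _ hu.aemeasurable, lintegral_prod]
    exact hu.lintegral_prod_left'.aemeasurable
  have hv_int : ∫⁻ q, v q ∂μ.prod (ν.prod κ) = ∫⁻ x, ∫⁻ z, ∫⁻ t, v (x, t, z) ∂ν ∂κ ∂μ := by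
    rw [lintegral_prod _ hv.aemeasurable]
    exact lintegral_congr fun x => lintegral_prod_symm _ (by fun_prop)
  have hA : Measurable fun y => ∫⁻ z, ∫⁻ s, u (s, y, z) ∂μ ∂κ :=
    hu.lintegral_prod_left'.lintegral_prod_right'
  have hB : Measurable fun x => ∫⁻ z, ∫⁻ t, v (x, t, z) ∂ν ∂κ := by
    have hv' : Measurable fun r : (α × γ) × β => v (r.1.1, r.2, r.1.2) := by fun_prop
    exact hv'.lintegral_prod_right'.lintegral_prod_right'
  rw [hu_int, hv_int, mul_comm]
  refine lintegral_sq_le_lintegral_mul_lintegral (φ := fun p => ∫⁻ z, φ (p.1, p.2, z) ∂κ)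
    hA.aemeasurable hB.aemeasurable ?_ ?_
  · filter_upwards [hφu] with x hx y using lintegral_mono (hx y)
  · filter_upwards [hφv] with y hy x using lintegral_mono (hy x)

end Product

section Interval

variable {a b x s : ℝ}

lemma enorm_sub_le_lintegral_deriv_of_contDiffOn_Ioo {E : Type*} [NormedAddCommGroup E]
    [NormedSpace ℝ E] {g : ℝ → E} (hg : ContDiffOn ℝ 1 g (Ioo a b)) (hx : x ∈ Ioo a b)
    (hs : s ∈ Ioo a b) :
    ‖g x - g s‖ₑ ≤ ∫⁻ t in Ioo a b, ‖deriv g t‖ₑ := by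
  wlog hsx : s ≤ x generalizing x s
  · rw [enorm_sub_rev]
    exact this hs hx (le_of_not_ge hsx)
  have hsub : Icc s x ⊆ Ioo a b := Icc_subset_Ioo hs.1 hx.2
  exact (enorm_sub_le_lintegral_deriv_of_contDiffOn_Icc (hg.mono hsub) hsx).trans
    (lintegral_mono_set hsub)

variable {E : Type*} [NormedAddCommGroup E] [InnerProductSpace ℝ E] {g : ℝ → E}

lemma enorm_deriv_norm_sq_le (hg : DifferentiableAt ℝ g x) :
    ‖deriv (fun t => ‖g t‖ ^ 2) x‖ₑ ≤ 2 * (‖g x‖ₑ * ‖deriv g x‖ₑ) := by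
  rw [hg.hasDerivAt.norm_sq.deriv, enorm_mul, Real.enorm_eq_ofReal zero_le_two,
    ENNReal.ofReal_ofNat]
  gcongr
  simpa only [enorm_eq_nnnorm, ← ENNReal.coe_mul, ENNReal.coe_le_coe] using
    nnnorm_inner_le_nnnorm (𝕜 := ℝ) (g x) (deriv g x)

lemma enorm_sq_le_enorm_sq_add_lintegral (hg : ContDiffOn ℝ 1 g (Ioo a b)) (hx : x ∈ Ioo a b)
    (hs : s ∈ Ioo a b) :
    ‖g x‖ₑ ^ 2 ≤ ‖g s‖ₑ ^ 2 + ∫⁻ t in Ioo a b, 2 * (‖g t‖ₑ * ‖deriv g t‖ₑ) := by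
  have hdiff : ∀ t ∈ Ioo a b, DifferentiableAt ℝ g t := fun t ht =>
    (hg.differentiableOn one_ne_zero).differentiableAt (isOpen_Ioo.mem_nhds ht)
  calc ‖g x‖ₑ ^ 2 = ‖‖g s‖ ^ 2 + (‖g x‖ ^ 2 - ‖g s‖ ^ 2)‖ₑ := by simp
    _ ≤ ‖g s‖ₑ ^ 2 + ‖‖g x‖ ^ 2 - ‖g s‖ ^ 2‖ₑ := (enorm_add_le _ _).trans_eq (by simp)
    _ ≤ ‖g s‖ₑ ^ 2 + ∫⁻ t in Ioo a b, ‖deriv (fun t => ‖g t‖ ^ 2) t‖ₑ := by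
        gcongr
        exact enorm_sub_le_lintegral_deriv_of_contDiffOn_Ioo (hg.norm_sq ℝ) hx hs
    _ ≤ ‖g s‖ₑ ^ 2 + ∫⁻ t in Ioo a b, 2 * (‖g t‖ₑ * ‖deriv g t‖ₑ) := 
        add_le_add le_rfl <| setLIntegral_mono' measurableSet_Ioo fun t ht =>
          enorm_deriv_norm_sq_le (hdiff t ht)

lemma ofReal_mul_enorm_sq_le_lintegral (hg : ContDiffOn ℝ 1 g (Ioo a b)) (hx : x ∈ Ioo a b) :
    ENNReal.ofReal (b - a) * ‖g x‖ₑ ^ 2 ≤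
      ∫⁻ s in Ioo a b,
        (‖g s‖ₑ ^ 2 + ENNReal.ofReal (b - a) * (2 * (‖g s‖ₑ * ‖deriv g s‖ₑ))) := by
  set c := ∫⁻ t in Ioo a b, 2 * (‖g t‖ₑ * ‖deriv g t‖ₑ) with hc
  calc ENNReal.ofReal (b - a) * ‖g x‖ₑ ^ 2
      = ∫⁻ _ in Ioo a b, ‖g x‖ₑ ^ 2 := by rw [setLIntegral_const, Real.volume_Ioo, mul_comm]
    _ ≤ ∫⁻ s in Ioo a b, (‖g s‖ₑ ^ 2 + c) :=
        setLIntegral_mono' measurableSet_Ioo fun s hs =>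
          enorm_sq_le_enorm_sq_add_lintegral hg hx hs
    _ = (∫⁻ s in Ioo a b, ‖g s‖ₑ ^ 2) + ENNReal.ofReal (b - a) * c := by
        rw [lintegral_add_right _ measurable_const, setLIntegral_const, Real.volume_Ioo, mul_comm c]
    _ ≤ _ := by
        rw [hc, ← lintegral_const_mul' _ _ ENNReal.ofReal_ne_top]
        exact le_lintegral_add _ _

end Interval

section Anisotropic

/-- The measure on the fundamental domain `(0,1)` of the circle `ℝ/ℤ`. -/
noncomputable abbrev torus1Measure : Measure ℝ :=
  volume.restrict (Ioo 0 1)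

/-- The measure `dx dy dκ(z)` on the fundamental domain `(0,1)² × F` of `𝕋² × F`, associated to the
right so as to match `slabMeasure`. -/
noncomputable abbrev torus2ProdMeasure {F : Type*} [MeasurableSpace F] (κ : Measure F) :
    Measure (ℝ × ℝ × F) :=
  torus1Measure.prod (torus1Measure.prod κ)

lemma torus2Measure_eq_prod : torus2Measure = torus1Measure.prod torus1Measure := by
  rw [torus2Measure, Measure.prod_restrict, ← Measure.volume_eq_prod]

lemma slabMeasure_eq_torus2ProdMeasure (h : ℝ) :
    slabMeasure h = torus2ProdMeasure (volume.restrict (Ioo (-h) 0)) := by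
  simp only [slabMeasure, torus2ProdMeasure, torus1Measure, Measure.prod_restrict,
    ← Measure.volume_eq_prod]

variable {E F : Type*} [NormedAddCommGroup E] [NormedAddCommGroup F] [NormedSpace ℝ F]

/-- The pointwise norm `|∇₂ f| = (|∂ₓ f|² + |∂_y f|²)^{1/2}` of the horizontal gradient, for a
function `f (x, y, z)` whose vertical variable `z` ranges over a normed space. -/
noncomputable def horizontalGradNorm [NormedSpace ℝ E] (f : ℝ × ℝ × F → E) (p : ℝ × ℝ × F) : ℝ :=
  √(‖fderiv ℝ f p (1, 0, 0)‖ ^ 2 + ‖fderiv ℝ f p (0, 1, 0)‖ ^ 2)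

lemma horizontalGradNorm_real (f : ℝ × ℝ × F → ℝ) :
    horizontalGradNorm f =
      fun p => √(fderiv ℝ f p (1, 0, 0) ^ 2 + fderiv ℝ f p (0, 1, 0) ^ 2) := by
  ext p
  simp [horizontalGradNorm]

section NormedSpace

variable [NormedSpace ℝ E] {f : ℝ × ℝ × F → E} {x y : ℝ} {z : F}

lemma deriv_fst_slice (hf : DifferentiableAt ℝ f (x, y, z)) :
    deriv (fun s => f (s, y, z)) x = fderiv ℝ f (x, y, z) (1, 0, 0) :=
  (hf.hasFDerivAt.comp_hasDerivAt x ((hasDerivAt_id x).prodMk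
    ((hasDerivAt_const x y).prodMk (hasDerivAt_const x z)))).deriv

lemma deriv_snd_slice (hf : DifferentiableAt ℝ f (x, y, z)) :
    deriv (fun t => f (x, t, z)) y = fderiv ℝ f (x, y, z) (0, 1, 0) :=
  (hf.hasFDerivAt.comp_hasDerivAt y ((hasDerivAt_const y x).prodMk
    ((hasDerivAt_id y).prodMk (hasDerivAt_const y z)))).deriv

lemma norm_fderiv_fst_le_horizontalGradNorm (f : ℝ × ℝ × F → E) (p : ℝ × ℝ × F) :
    ‖fderiv ℝ f p (1, 0, 0)‖ ≤ horizontalGradNorm f p :=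
  Real.le_sqrt_of_sq_le (le_add_of_nonneg_right (sq_nonneg _))

lemma norm_fderiv_snd_le_horizontalGradNorm (f : ℝ × ℝ × F → E) (p : ℝ × ℝ × F) :
    ‖fderiv ℝ f p (0, 1, 0)‖ ≤ horizontalGradNorm f p :=
  Real.le_sqrt_of_sq_le (le_add_of_nonneg_left (sq_nonneg _))

lemma continuous_horizontalGradNorm (hf : ContDiff ℝ 1 f) : Continuous (horizontalGradNorm f) := by
  have hdf : ∀ v, Continuous fun p => fderiv ℝ f p v := fun v =>
    (hf.continuous_fderiv one_ne_zero).clm_apply continuous_const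
  exact (((hdf _).norm.pow 2).add ((hdf _).norm.pow 2)).sqrt

end NormedSpace

variable [InnerProductSpace ℝ E] {f : ℝ × ℝ × F → E} {x y : ℝ}

lemma enorm_sq_le_lintegral_fst (hf : ContDiff ℝ 1 f) (hx : x ∈ Ioo (0 : ℝ) 1) (y : ℝ) (z : F) :
    ‖f (x, y, z)‖ₑ ^ 2 ≤ ∫⁻ s, (‖f (s, y, z)‖ₑ ^ 2 +
      2 * (‖f (s, y, z)‖ₑ * ‖fderiv ℝ f (s, y, z) (1, 0, 0)‖ₑ)) ∂torus1Measure := by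
  have hslice : ContDiff ℝ 1 fun s => f (s, y, z) := by fun_prop
  simpa [deriv_fst_slice (hf.differentiable one_ne_zero _)] using
    ofReal_mul_enorm_sq_le_lintegral hslice.contDiffOn hx

lemma enorm_sq_le_lintegral_snd (hf : ContDiff ℝ 1 f) (hy : y ∈ Ioo (0 : ℝ) 1) (x : ℝ) (z : F) :
    ‖f (x, y, z)‖ₑ ^ 2 ≤ ∫⁻ t, (‖f (x, t, z)‖ₑ ^ 2 +
      2 * (‖f (x, t, z)‖ₑ * ‖fderiv ℝ f (x, t, z) (0, 1, 0)‖ₑ)) ∂torus1Measure := by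
  have hslice : ContDiff ℝ 1 fun t => f (x, t, z) := by fun_prop
  simpa [deriv_snd_slice (hf.differentiable one_ne_zero _)] using
    ofReal_mul_enorm_sq_le_lintegral hslice.contDiffOn hy

variable [MeasurableSpace F] [OpensMeasurableSpace F] [SecondCountableTopology F]
  {κ : Measure F} [SFinite κ]

lemma lintegral_sq_lintegral_enorm_sq_le (hf : ContDiff ℝ 1 f) :
    ∫⁻ p : ℝ × ℝ, (∫⁻ z, ‖f (p.1, p.2, z)‖ₑ ^ 2 ∂κ) ^ 2 ∂torus2Measure ≤
      (2 * (eLpNorm f 2 (torus2ProdMeasure κ) * (eLpNorm f 2 (torus2ProdMeasure κ) +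
        eLpNorm (horizontalGradNorm f) 2 (torus2ProdMeasure κ)))) ^ 2 := by
  set w : ℝ × ℝ × F → ℝ × ℝ × F → ℝ≥0∞ := fun v q =>
    ‖f q‖ₑ ^ 2 + 2 * (‖f q‖ₑ * ‖fderiv ℝ f q v‖ₑ)
  have hfc := hf.continuous
  have hdf : ∀ v, Continuous fun q => fderiv ℝ f q v := fun v =>
    (hf.continuous_fderiv one_ne_zero).clm_apply continuous_const
  have hw_meas : ∀ v, Measurable (w v) := fun v => by
    have := hfc.enorm.measurable
    have := (hdf v).enorm.measurable
    fun_prop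
  have hw_int : ∀ v, (∀ q, ‖fderiv ℝ f q v‖ ≤ horizontalGradNorm f q) →
      ∫⁻ q, w v q ∂torus2ProdMeasure κ ≤
        2 * (eLpNorm f 2 (torus2ProdMeasure κ) * (eLpNorm f 2 (torus2ProdMeasure κ) +
          eLpNorm (horizontalGradNorm f) 2 (torus2ProdMeasure κ))) := fun v hv =>
    (lintegral_enorm_sq_add_two_mul_le hfc.aestronglyMeasurable
      (hdf v).aestronglyMeasurable).trans (by gcongr; exact eLpNorm_mono_real hv)
  rw [torus2Measure_eq_prod]
  refine (lintegral_sq_lintegral_le (φ := fun q => ‖f q‖ₑ ^ 2)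
    (hw_meas (1, 0, 0)) (hw_meas (0, 1, 0)) ?_ ?_).trans ?_
  · filter_upwards [ae_restrict_mem measurableSet_Ioo] with x hx using
      enorm_sq_le_lintegral_fst hf hx
  · filter_upwards [ae_restrict_mem measurableSet_Ioo] with y hy using
      enorm_sq_le_lintegral_snd hf hy
  · rw [sq]
    exact mul_le_mul' (hw_int _ (norm_fderiv_fst_le_horizontalGradNorm f))
      (hw_int _ (norm_fderiv_snd_le_horizontalGradNorm f))

lemma eLpNorm_four_integral_norm_sq_le (hf : ContDiff ℝ 1 f) :
    eLpNorm (fun p : ℝ × ℝ => ∫ z, ‖f (p.1, p.2, z)‖ ∂κ) 4 torus2Measure ^ 2 ≤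
      κ univ * (2 * (eLpNorm f 2 (torus2ProdMeasure κ) * (eLpNorm f 2 (torus2ProdMeasure κ) +
        eLpNorm (horizontalGradNorm f) 2 (torus2ProdMeasure κ)))) := by
  have hfc := hf.continuous
  have hslice : ∀ p : ℝ × ℝ, ‖∫ z, ‖f (p.1, p.2, z)‖ ∂κ‖ₑ ^ 2 ≤
      κ univ * ∫⁻ z, ‖f (p.1, p.2, z)‖ₑ ^ 2 ∂κ := fun p => by
    have hp : Continuous fun z => f (p.1, p.2, z) := by fun_prop
    refine le_trans ?_ (sq_lintegral_enorm_le hp.aestronglyMeasurable)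
    gcongr
    simpa only [enorm_norm] using
      enorm_integral_le_lintegral_enorm (μ := κ) fun z => ‖f (p.1, p.2, z)‖
  have hmeas : Measurable fun p : ℝ × ℝ => ∫⁻ z, ‖f (p.1, p.2, z)‖ₑ ^ 2 ∂κ := by
    have hf_meas : Measurable fun r : (ℝ × ℝ) × F => ‖f (r.1.1, r.1.2, r.2)‖ₑ ^ 2 := by
      have hf_assoc : Continuous fun r : (ℝ × ℝ) × F => f (r.1.1, r.1.2, r.2) := by fun_prop
      exact hf_assoc.enorm.measurable.pow_const 2
    exact hf_meas.lintegral_prod_right'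
  refine (ENNReal.pow_le_pow_left_iff two_ne_zero).1 ?_
  calc (eLpNorm (fun p : ℝ × ℝ => ∫ z, ‖f (p.1, p.2, z)‖ ∂κ) 4 torus2Measure ^ 2) ^ 2
      = ∫⁻ p : ℝ × ℝ, (‖∫ z, ‖f (p.1, p.2, z)‖ ∂κ‖ₑ ^ 2) ^ 2 ∂torus2Measure := by
        simp only [← pow_mul]
        exact eLpNorm_natCast_pow_eq_lintegral four_ne_zero _
    _ ≤ ∫⁻ p : ℝ × ℝ, (κ univ * ∫⁻ z, ‖f (p.1, p.2, z)‖ₑ ^ 2 ∂κ) ^ 2 ∂torus2Measure := by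
        gcongr with p
        exact hslice p
    _ = κ univ ^ 2 * ∫⁻ p : ℝ × ℝ, (∫⁻ z, ‖f (p.1, p.2, z)‖ₑ ^ 2 ∂κ) ^ 2 ∂torus2Measure := by
        simp only [mul_pow]
        exact lintegral_const_mul _ (hmeas.pow_const 2)
    _ ≤ _ := by
        rw [mul_pow]
        gcongr
        exact lintegral_sq_lintegral_enorm_sq_le hf

end Anisotropic

lemma eLpNorm_slabMeasure_ne_top {E : Type*} [NormedAddCommGroup E] {h : ℝ} {p : ℝ≥0∞}
    {g : ℝ × ℝ × ℝ → E} (hg : Continuous g) : eLpNorm g p (slabMeasure h) ≠ ∞ := by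
  have hK : IsCompact (Icc (0 : ℝ) 1 ×ˢ Icc (0 : ℝ) 1 ×ˢ Icc (-h) 0) :=
    isCompact_Icc.prod (isCompact_Icc.prod isCompact_Icc)
  obtain ⟨M, hM⟩ := hK.exists_bound_of_continuousOn hg.continuousOn
  have : IsFiniteMeasure (slabMeasure h) := by
    rw [slabMeasure_eq_torus2ProdMeasure]
    infer_instance
  refine (MemLp.of_bound hg.aestronglyMeasurable M ?_).eLpNorm_ne_top
  filter_upwards [ae_restrict_mem
    (measurableSet_Ioo.prod (measurableSet_Ioo.prod measurableSet_Ioo))] with q hq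
  exact hM q (prod_mono Ioo_subset_Icc_self (prod_mono Ioo_subset_Icc_self Ioo_subset_Icc_self) hq)

section Slab

variable {E : Type*} [NormedAddCommGroup E] [InnerProductSpace ℝ E] {h : ℝ} {f : ℝ × ℝ × ℝ → E}

lemma eLpNorm_four_vertical_integral_sq_le (hh : 0 ≤ h) (hf : ContDiff ℝ 1 f) :
    eLpNorm (fun xy : ℝ × ℝ => ∫ z in (-h)..(0 : ℝ), ‖f (xy.1, xy.2, z)‖) 4 torus2Measure ^ 2 ≤
      ENNReal.ofReal h * (2 * (eLpNorm f 2 (slabMeasure h) * (eLpNorm f 2 (slabMeasure h) +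
        eLpNorm (horizontalGradNorm f) 2 (slabMeasure h)))) := by
  simp only [intervalIntegral.integral_of_le (neg_nonpos.2 hh), integral_Ioc_eq_integral_Ioo,
    slabMeasure_eq_torus2ProdMeasure]
  simpa only [Measure.restrict_apply_univ, Real.volume_Ioo, zero_sub, neg_neg] using
    eLpNorm_four_integral_norm_sq_le (κ := volume.restrict (Ioo (-h) 0)) hf

theorem vertical_integral_L4_estimate_general (hh : 0 ≤ h) (hf : ContDiff ℝ 1 f) :
    (eLpNorm (fun xy : ℝ × ℝ => ∫ z in (-h)..(0 : ℝ), ‖f (xy.1, xy.2, z)‖) 4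
        torus2Measure).toReal ≤
      √2 * √h * (eLpNorm f 2 (slabMeasure h)).toReal ^ ((1 : ℝ) / 2) *
        ((eLpNorm f 2 (slabMeasure h)).toReal +
          (eLpNorm (horizontalGradNorm f) 2 (slabMeasure h)).toReal) ^ ((1 : ℝ) / 2) := by
  have hN : eLpNorm f 2 (slabMeasure h) ≠ ∞ := eLpNorm_slabMeasure_ne_top hf.continuous
  have hD : eLpNorm (horizontalGradNorm f) 2 (slabMeasure h) ≠ ∞ :=
    eLpNorm_slabMeasure_ne_top (continuous_horizontalGradNorm hf)
  have hsq := ENNReal.toReal_mono (by finiteness) (eLpNorm_four_vertical_integral_sq_le hh hf)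
  simp only [ENNReal.toReal_pow, ENNReal.toReal_mul, ENNReal.toReal_add hN hD,
    ENNReal.toReal_ofReal hh, ENNReal.toReal_ofNat] at hsq
  rw [← Real.sqrt_eq_rpow, ← Real.sqrt_eq_rpow, ← Real.sqrt_mul zero_le_two,
    ← Real.sqrt_mul (by positivity), ← Real.sqrt_mul (by positivity)]
  exact Real.le_sqrt_of_sq_le (hsq.trans_eq (by ring))

end Slab

/-- The anisotropic estimate
`‖∫_{−h}^{0} |f(·,·,z)| dz‖_{L⁴(𝕋²)} ≤ C h^{1/2} ‖f‖_{L²(Ω)}^{1/2} (‖f‖_{L²(Ω)} + ‖∇₂f‖_{L²(Ω)})^{1/2}`,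
with `C` independent of `h` and `f`. -/
theorem vertical_integral_L4_estimate :
    ∃ C : ℝ, 0 < C ∧
      ∀ (h : ℝ), 0 < h →
        ∀ f : ℝ × ℝ × ℝ → ℝ, ContDiff ℝ 1 f → HorizontallyPeriodic f →
          (eLpNorm (fun xy : ℝ × ℝ => ∫ z in (-h)..(0 : ℝ), |f (xy.1, xy.2, z)|) 4
              torus2Measure).toReal ≤
            C * Real.sqrt h * (eLpNorm f 2 (slabMeasure h)).toReal ^ ((1 : ℝ) / 2) *
              ((eLpNorm f 2 (slabMeasure h)).toReal +
                  (eLpNorm (fun p =>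
                      Real.sqrt ((fderiv ℝ f p (1, 0, 0)) ^ 2 + (fderiv ℝ f p (0, 1, 0)) ^ 2))
                    2 (slabMeasure h)).toReal) ^ ((1 : ℝ) / 2) := by
  refine ⟨√2, by positivity, fun h hh f hf _ => ?_⟩
  simpa only [horizontalGradNorm_real, Real.norm_eq_abs] using
    vertical_integral_L4_estimate_general hh.le hf
end
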